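/- arXiv:1310.2858 — 2 statements merged into one kernel-verified Lean document; each statement's English description precedes it below -/
import Mathlib

section
/- (General upper bound on convergence time.) There exists n₀ such that for all n ≥ n₀ the following holds. Let λ be any value with 3 ≤ λ < √n. If the initial configuration C_0 = c̄ is a k-cd for n nodes such that, for some m ∈ [k], M(c̄) = {m}, c_m ≥ n/λ, and s(c̄) ≥ 22·√(λ·n·log n), then with probability at least 1 − 110·λ·log n / n², within 100·λ·log n rounds of the 3-majority dynamics every node has color m (i.e., there is a round t ≤ 100·λ·log n with C_{m,t} = n). -/
open Finset

/-- The color appearing at least twice among `x, y, z`, or `x` if all three are distinct. -/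
def maj3 {k : ℕ} (x y z : Fin k) : Fin k := if y = z then y else x

/-- Number of nodes with color `j` in the assignment `a`. -/
def cnt {n k : ℕ} (a : Fin n → Fin k) (j : Fin k) : ℕ :=
  (Finset.univ.filter (fun i => a i = j)).card

/-- One sample for a round of the 3-majority dynamics: each node picks three nodes
(uniformly at random, with replacement). -/
abbrev Sample (n : ℕ) := Fin n → Fin n × Fin n × Fin n

/-- The assignment obtained from `a` after one step of the 3-majority dynamics with samples `S`. -/
def stepA {n k : ℕ} (a : Fin n → Fin k) (S : Sample n) : Fin n → Fin k :=
  fun i => maj3 (a (S i).1) (a (S i).2.1) (a (S i).2.2)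

/-- Probability that the event `E` holds for the configuration obtained from `a`
after one step of the 3-majority dynamics (samples are uniform and independent). -/
noncomputable def stepPr {n k : ℕ} (a : Fin n → Fin k) (E : (Fin n → Fin k) → Prop) : ℝ :=
  (Nat.card {S : Sample n // E (stepA a S)} : ℝ) / (Nat.card (Sample n) : ℝ)

/-- Expectation of `f` of the configuration obtained from `a` after one step of the
3-majority dynamics. -/
noncomputable def stepE {n k : ℕ} (a : Fin n → Fin k) (f : (Fin n → Fin k) → ℝ) : ℝ :=
  (∑ S : Sample n, f (stepA a S)) / (Nat.card (Sample n) : ℝ)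

/-- `m(c̄)`: the size of the largest color class. -/
def mval {k : ℕ} (c : Fin k → ℕ) : ℕ := Finset.univ.sup c

/-- `M(c̄)`: the set of colors attaining the maximum. -/
def Mset {k : ℕ} (c : Fin k → ℕ) : Finset (Fin k) :=
  Finset.univ.filter (fun j => c j = mval c)

/-- `s(c̄)`: the bias, i.e. the gap between the (unique) maximum and the second largest
color class; `0` if the maximum is not unique. -/
def sval {k : ℕ} (c : Fin k → ℕ) : ℕ :=
  if (Mset c).card = 1 then mval c - (Finset.univ \ Mset c).sup c else 0

/-- `α(c̄) = (n − m(c̄))·s(c̄)/n²`. -/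
noncomputable def alphaV (n : ℕ) {k : ℕ} (c : Fin k → ℕ) : ℝ :=
  ((n : ℝ) - mval c) * sval c / (n : ℝ) ^ 2

/-- `γ(c̄) = (n·m(c̄) − Σ_h c_h²)/n² − α(c̄)`. -/
noncomputable def gammaV (n : ℕ) {k : ℕ} (c : Fin k → ℕ) : ℝ :=
  ((n : ℝ) * mval c - ∑ h, (c h : ℝ) ^ 2) / (n : ℝ) ^ 2 - alphaV n c

/-- The trajectory of the 3-majority dynamics started at `a`, driven by the samples `S`
for the first `N` rounds. -/
def trajA {n k N : ℕ} (a : Fin n → Fin k) (S : Fin N → Sample n) : ℕ → Fin n → Fin k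
  | 0 => a
  | t + 1 => if h : t < N then stepA (trajA a S t) (S ⟨t, h⟩) else trajA a S t

/-- Probability of an event `E` for an `N`-round run of the 3-majority dynamics
(all samples of all rounds are uniform and independent). -/
noncomputable def runPr {n k : ℕ} (N : ℕ) (a : Fin n → Fin k)
    (E : (Fin N → Sample n) → Prop) : ℝ :=
  (Nat.card {S : Fin N → Sample n // E S} : ℝ) / (Nat.card (Fin N → Sample n) : ℝ)

namespace GUB

noncomputable def Ex {α : Type*} [Fintype α] (f : α → ℝ) : ℝ := (∑ x, f x) / (Fintype.card α : ℝ)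

section
variable {α : Type*} [Fintype α]

lemma Ex_mono {f g : α → ℝ} (h : ∀ x, f x ≤ g x) : Ex f ≤ Ex g := by
  unfold Ex
  gcongr with x
  exact h x

lemma Ex_add (f g : α → ℝ) : Ex (fun x => f x + g x) = Ex f + Ex g := by
  unfold Ex
  rw [Finset.sum_add_distrib, add_div]

lemma Ex_mul (c : ℝ) (f : α → ℝ) : Ex (fun x => c * f x) = c * Ex f := by
  unfold Ex
  rw [← Finset.mul_sum, mul_div_assoc]

lemma Ex_sub (f g : α → ℝ) : Ex (fun x => f x - g x) = Ex f - Ex g := by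
  unfold Ex
  rw [Finset.sum_sub_distrib, sub_div]

lemma Ex_const [Nonempty α] (c : ℝ) : Ex (fun _ : α => c) = c := by
  unfold Ex
  have : (Fintype.card α : ℝ) ≠ 0 := by exact_mod_cast Fintype.card_ne_zero
  simp

lemma Ex_sum {ι : Type*} (s : Finset ι) (f : ι → α → ℝ) :
    Ex (fun x => ∑ i ∈ s, f i x) = ∑ i ∈ s, Ex (f i) := by
  unfold Ex
  rw [Finset.sum_comm, Finset.sum_div]

lemma Ex_prod {n : ℕ} (f : Fin n → α → ℝ) :
    Ex (fun S : Fin n → α => ∏ i, f i (S i)) = ∏ i, Ex (f i) := by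
  unfold Ex
  rw [Finset.prod_div_distrib, Finset.prod_univ_sum]
  simp

lemma Ex_coord [Nonempty α] {n : ℕ} (i : Fin n) (f : α → ℝ) :
    Ex (fun S : Fin n → α => f (S i)) = Ex f := by
  have h := Ex_prod (fun (j : Fin n) (x : α) => if j = i then f x else 1)
  have h1 : (fun S : Fin n → α => ∏ j, (if j = i then f (S j) else 1)) = fun S => f (S i) := by
    funext S
    simp
  rw [h1] at h
  rw [h, Finset.prod_eq_single i]
  · simp
  · intro j _ hj
    simp [hj, Ex_const]
  · simp

lemma exp_aux {x : ℝ} (h : |x| ≤ 1) : Real.exp x ≤ 1 + x + x ^ 2 := by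
  have := Real.abs_exp_sub_one_sub_id_le h
  have := (abs_le.mp this).2
  linarith

open Classical in
lemma chern [Nonempty α] (n : ℕ) (g : α → ℝ) (hg : ∀ x, |g x| ≤ 1) (θ μ v d : ℝ)
    (h0 : 0 ≤ θ) (h1 : θ ≤ 1) (hμ : μ ≤ Ex g) (hv : Ex (fun x => g x ^ 2) ≤ v) :
    Ex (fun S : Fin n → α => if ∑ i, g (S i) ≤ d then (1:ℝ) else 0) ≤
      Real.exp (θ * d - θ * n * μ + θ ^ 2 * n * v) := by
  have e1 : Ex (fun x => Real.exp (-θ * g x)) ≤ Real.exp (-θ * μ + θ ^ 2 * v) := by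
    calc Ex (fun x => Real.exp (-θ * g x)) ≤ Ex (fun x => (1 + (-θ) * g x) + θ ^ 2 * g x ^ 2) := by
          apply Ex_mono
          intro x
          have : |-θ * g x| ≤ 1 := by
            rw [abs_mul, abs_neg, abs_of_nonneg h0]
            nlinarith [hg x, abs_nonneg (g x)]
          have := exp_aux this
          nlinarith
      _ = 1 + (-θ) * Ex g + θ ^ 2 * Ex (fun x => g x ^ 2) := by
          rw [Ex_add, Ex_add, Ex_const, Ex_mul, Ex_mul]
      _ ≤ 1 + (-θ * μ + θ ^ 2 * v) := by
          nlinarith [mul_le_mul_of_nonneg_left hμ h0, mul_le_mul_of_nonneg_left hv (sq_nonneg θ)]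
      _ ≤ _ := by
          have := Real.add_one_le_exp (-θ * μ + θ ^ 2 * v)
          linarith
  have e0 : 0 ≤ Ex (fun x => Real.exp (-θ * g x)) := by
    unfold Ex
    positivity
  calc _ ≤ Ex (fun S : Fin n → α => Real.exp (θ * d) * ∏ i, Real.exp (-θ * g (S i))) := by
        apply Ex_mono
        intro S
        rw [← Real.exp_sum, ← Real.exp_add, ← Finset.mul_sum]
        split_ifs with h
        · apply Real.one_le_exp
          nlinarith
        · positivity
    _ = Real.exp (θ * d) * (Ex (fun x => Real.exp (-θ * g x))) ^ n := by
        rw [Ex_mul, Ex_prod (fun _ x => Real.exp (-θ * g x))]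
        simp
    _ ≤ Real.exp (θ * d) * (Real.exp (-θ * μ + θ ^ 2 * v)) ^ n := by
        gcongr
    _ = _ := by
        rw [← Real.exp_nat_mul, ← Real.exp_add]
        congr 1
        ring
end

/-- failure probability -/
noncomputable def F {n k : ℕ} (m : Fin k) : ℕ → (Fin n → Fin k) → ℝ
  | 0, a => if cnt a m = n then 0 else 1
  | N + 1, a => Ex (fun S : Sample n => F m N (stepA a S))

lemma traj_cons {n k N : ℕ} (a : Fin n → Fin k) (s : Sample n) (S : Fin N → Sample n) (t : ℕ) :
    trajA a (Fin.cons s S : Fin (N+1) → Sample n) (t + 1) = trajA (stepA a s) S t := by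
  induction t with
  | zero => simp [trajA]
  | succ t ih =>
    rw [trajA, ih]
    rw [trajA]
    by_cases h : t < N
    · have : t + 1 < N + 1 := by omega
      rw [dif_pos h, dif_pos this]
      congr 1
    · have : ¬ t + 1 < N + 1 := by omega
      rw [dif_neg h, dif_neg this]

lemma F_eq {n k : ℕ} (m : Fin k) (N : ℕ) (a : Fin n → Fin k) :
    F m N a = Ex (fun S : Fin N → Sample n => if cnt (trajA a S N) m = n then (0:ℝ) else 1) := by
  induction N generalizing a with
  | zero =>
    simp [F, Ex, trajA]
    congr
  | succ N ih =>
    rw [F]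
    simp_rw [ih]
    unfold Ex
    rw [← (Fin.consEquiv (fun _ : Fin (N+1) => Sample n)).sum_comp, Fintype.sum_prod_type]
    have : ∀ (s : Sample n) (S : Fin N → Sample n),
      trajA a ((Fin.consEquiv (fun _ : Fin (N+1) => Sample n)) (s, S)) (N+1)
        = trajA (stepA a s) S N := fun s S => traj_cons a s S N
    simp_rw [this]
    rw [← Finset.sum_div, div_div]
    congr 1
    rw [← Nat.cast_mul]
    congr 1
    simp only [Fintype.card_pi, Finset.prod_const, Finset.card_univ, Fintype.card_fin]
    ring

lemma runPr_ge {n k : ℕ} (hn : 0 < n) (m : Fin k) (N : ℕ) (a : Fin n → Fin k)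
    (E : (Fin N → Sample n) → Prop) (hE : ∀ S, cnt (trajA a S N) m = n → E S) :
    1 - F m N a ≤ runPr N a E := by
  classical
  have : Nonempty (Fin n) := ⟨⟨0, hn⟩⟩
  have h1 : runPr N a E = Ex (fun S : Fin N → Sample n => if E S then (1:ℝ) else 0) := by
    unfold runPr Ex
    rw [Nat.card_eq_fintype_card, Nat.card_eq_fintype_card, Fintype.card_subtype]
    simp
  have h2 := Ex_const (α := Fin N → Sample n) 1
  rw [h1, F_eq]
  nth_rewrite 1 [← h2]
  rw [← Ex_sub]
  apply Ex_mono
  intro S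
  by_cases h : cnt (trajA a S N) m = n
  · simp [h, hE S h]
  · simp only [h, if_false]
    split_ifs <;> simp

section step
variable {n k : ℕ}

/-- number of pairs of equal color -/
noncomputable def Q (a : Fin n → Fin k) : ℝ := ∑ y, ∑ z, if a y = a z then (1:ℝ) else 0

lemma cnt_sum (a : Fin n → Fin k) (j : Fin k) :
    (cnt a j : ℝ) = ∑ i, if a i = j then (1:ℝ) else 0 := by
  simp [cnt]

lemma cnt_le (a : Fin n → Fin k) (j : Fin k) : cnt a j ≤ n := by
  unfold cnt
  exact (Finset.card_filter_le _ _).trans (by simp)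

lemma Q_eq (a : Fin n → Fin k) : Q a = ∑ y, (cnt a (a y) : ℝ) := by
  unfold Q
  refine Finset.sum_congr rfl fun y _ => ?_
  rw [cnt_sum]
  refine Finset.sum_congr rfl fun z _ => ?_
  simp [eq_comm]

lemma Q_le (a : Fin n → Fin k) (m : Fin k) (b : ℝ) (hb : ∀ j, j ≠ m → (cnt a j : ℝ) ≤ b) :
    Q a ≤ (cnt a m : ℝ) ^ 2 + b * (n - cnt a m) := by
  have h : ∀ y, (cnt a (a y) : ℝ) ≤ b + (cnt a m - b) * (if a y = m then (1:ℝ) else 0) := by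
    intro y
    split_ifs with h
    · rw [h]; linarith
    · simpa using hb _ h
  rw [Q_eq]
  refine (Finset.sum_le_sum fun y _ => h y).trans ?_
  rw [Finset.sum_add_distrib, ← Finset.mul_sum, ← cnt_sum]
  simp
  nlinarith

lemma le_Q (a : Fin n → Fin k) (m : Fin k) : (cnt a m : ℝ) ^ 2 ≤ Q a := by
  have h : ∀ y, (cnt a m : ℝ) * (if a y = m then (1:ℝ) else 0) ≤ (cnt a (a y) : ℝ) := by
    intro y
    split_ifs with h
    · rw [h]; linarith
    · simp
  rw [Q_eq]
  refine le_trans ?_ (Finset.sum_le_sum fun y _ => h y)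
  rw [← Finset.mul_sum, ← cnt_sum]
  nlinarith

/-- indicator that a triple yields color `j` -/
def ind (a : Fin n → Fin k) (j : Fin k) (t : Fin n × Fin n × Fin n) : ℝ :=
  if maj3 (a t.1) (a t.2.1) (a t.2.2) = j then 1 else 0

lemma cnt_step (a : Fin n → Fin k) (S : Sample n) (j : Fin k) :
    (cnt (stepA a S) j : ℝ) = ∑ i, ind a j (S i) := by
  rw [cnt_sum]
  rfl

lemma sum3 (f : Fin n → ℝ) (e : Fin n → Fin n → ℝ) :
    ∑ x, ∑ y, ∑ z, (f y * f z + f x * (1 - e y z)) =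
      n * (∑ x, f x) ^ 2 + (n ^ 2 - ∑ y, ∑ z, e y z) * ∑ x, f x := by
  have h1 : ∀ x y, ∑ z, (f y * f z + f x * (1 - e y z)) =
      f y * ∑ z, f z + f x * (n - ∑ z, e y z) := by
    intro x y
    rw [Finset.sum_add_distrib, ← Finset.mul_sum, ← Finset.mul_sum, Finset.sum_sub_distrib]
    simp
  have h2 : ∀ x, ∑ y, (f y * ∑ z, f z + f x * (n - ∑ z, e y z)) =
      (∑ y, f y) ^ 2 + f x * (n ^ 2 - ∑ y, ∑ z, e y z) := by
    intro x
    rw [Finset.sum_add_distrib, ← Finset.mul_sum, ← Finset.sum_mul, Finset.sum_sub_distrib]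
    simp
    ring
  simp_rw [h1, h2]
  rw [Finset.sum_add_distrib, ← Finset.sum_mul]
  simp
  ring

lemma Ex_ind (hn : 0 < n) (a : Fin n → Fin k) (j : Fin k) :
    Ex (ind a j) = (cnt a j / n : ℝ) * (1 + cnt a j / n - Q a / n ^ 2) := by
  have hn' : (n : ℝ) ≠ 0 := by positivity
  have h1 : ∑ t, ind a j t = n * (cnt a j : ℝ) ^ 2 + (n ^ 2 - Q a) * cnt a j := by
    have h2 : ∀ x y z, ind a j (x, y, z) =
        (if a y = j then (1:ℝ) else 0) * (if a z = j then (1:ℝ) else 0) +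
        (if a x = j then (1:ℝ) else 0) * (1 - (if a y = a z then (1:ℝ) else 0)) := by
      intro x y z
      unfold ind maj3
      by_cases hyz : a y = a z
      · by_cases hz : a z = j <;> simp [hyz, hz]
      · by_cases hz : a z = j
        · have : a y ≠ j := fun h => hyz (h.trans hz.symm)
          simp [hyz, this]
        · simp [hyz, hz]
    simp only [Fintype.sum_prod_type, h2]
    rw [sum3 (fun x => if a x = j then (1:ℝ) else 0) (fun y z => if a y = a z then (1:ℝ) else 0),
      ← cnt_sum]
    rfl
  unfold Ex
  rw [h1]
  simp
  field_simp
  ring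

lemma ind_sq (a : Fin n → Fin k) (j : Fin k) (t) : ind a j t ^ 2 = ind a j t := by
  unfold ind
  split_ifs <;> simp

lemma ind_abs (a : Fin n → Fin k) (j : Fin k) (t) : |ind a j t| ≤ 1 := by
  unfold ind
  split_ifs <;> simp

lemma ind_mul (a : Fin n → Fin k) {i j : Fin k} (h : i ≠ j) (t) : ind a i t * ind a j t = 0 := by
  unfold ind
  split_ifs with h1 h2 <;> simp
  exact h (h1.symm.trans h2)

lemma ind_nonneg (a : Fin n → Fin k) (j : Fin k) (t) : 0 ≤ ind a j t := by
  unfold ind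
  split_ifs <;> simp

lemma ind_le (a : Fin n → Fin k) (j : Fin k) (t) : ind a j t ≤ 1 := by
  unfold ind
  split_ifs <;> simp

lemma num_diff {p q σ Q : ℝ} (h1 : σ ≤ p - q) (hq : 0 ≤ q) (hσ : 0 ≤ σ) (hp : p ≤ 2/3)
    (hQ : Q ≤ p ^ 2 + (p - σ) * (1 - p)) :
    σ * (1 + p / 3) ≤ p * (1 + p - Q) - q * (1 + q - Q) := by
  have e : p * (1 + p - Q) - q * (1 + q - Q) = (p - q) * (1 + p + q - Q) := by ring
  have h2 : 1 + q + σ / 3 ≤ 1 + p + q - Q := by nlinarith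
  have h3 : (p - q) * (1 + q + σ / 3) ≤ (p - q) * (1 + p + q - Q) :=
    mul_le_mul_of_nonneg_left h2 (by linarith)
  rw [e]
  nlinarith [mul_nonneg (sub_nonneg.2 h1) hq, mul_nonneg (sub_nonneg.2 h1) (by linarith : 0 ≤ 1 - 2 * σ / 3)]

lemma num_top {p σ Q : ℝ} (hp0 : 0 ≤ p) (hσ : 0 ≤ σ) (hp : p ≤ 2/3)
    (hQ : Q ≤ p ^ 2 + (p - σ) * (1 - p)) :
    p + σ * p / 3 ≤ p * (1 + p - Q) := by
  have h2 : 1 + σ / 3 ≤ 1 + p - Q := by nlinarith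
  nlinarith [mul_le_mul_of_nonneg_left h2 hp0]

lemma num_var {p q Q : ℝ} (hq0 : 0 ≤ q) (hp : q ≤ p) (hp1 : p ≤ 1) (hQ : p ^ 2 ≤ Q) :
    q * (1 + q - Q) ≤ 5 / 4 * p := by
  have : 1 + q - Q ≤ 5 / 4 := by nlinarith [sq_nonneg (p - 1/2)]
  nlinarith

/-- goodness of a configuration -/
def Good (lam : ℝ) (m : Fin k) (a : Fin n → Fin k) (s : ℝ) : Prop :=
  (n : ℝ) / lam ≤ cnt a m ∧ s ≤ cnt a m ∧ ∀ j, j ≠ m → cnt a j + s ≤ cnt a m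

lemma exp_bound {n : ℕ} (hn : 0 < n) {lam p σ : ℝ} (hl : 3 ≤ lam)
    (hlp : 1 ≤ lam * p) (hs : 22 * Real.sqrt (lam * n * Real.log n) ≤ n * σ) :
    Real.exp (-(n * σ ^ 2 * p / 160)) ≤ 1 / (n : ℝ) ^ 3 := by
  have hn' : (1 : ℝ) ≤ n := by exact_mod_cast hn
  have hL : 0 ≤ Real.log n := Real.log_nonneg hn'
  have h1 : 484 * (lam * n * Real.log n) ≤ (n * σ) ^ 2 := by
    have h2 : 0 ≤ lam * n * Real.log n := by positivity
    have h3 := Real.sq_sqrt h2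
    have h4 := Real.sqrt_nonneg (lam * n * Real.log n)
    nlinarith
  have h5 : 484 * (lam * Real.log n) ≤ n * σ ^ 2 := by
    have : n * (484 * (lam * Real.log n)) ≤ n * (n * σ ^ 2) := by nlinarith
    exact le_of_mul_le_mul_left this (by linarith)
  have hp : 0 < p := by
    by_contra h
    nlinarith
  have h6 : 484 * Real.log n ≤ n * σ ^ 2 * p := by
    nlinarith [mul_le_mul_of_nonneg_right h5 hp.le, mul_le_mul_of_nonneg_left hlp hL]
  have h7 : 1 / (n : ℝ) ^ 3 = Real.exp (-(3 * Real.log n)) := by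
    rw [Real.exp_neg, show 3 * Real.log n = ((3 : ℕ) : ℝ) * Real.log n by norm_num,
      Real.exp_nat_mul, Real.exp_log (by linarith)]
    simp
  rw [h7]
  apply Real.exp_le_exp.2
  linarith

set_option maxHeartbeats 1000000 in
open Classical in
lemma good_step (hn : 0 < n) {lam : ℝ} (hl : 3 ≤ lam) (m : Fin k) (a : Fin n → Fin k) (s : ℝ)
    (hG : Good lam m a s) (hs : 22 * Real.sqrt (lam * n * Real.log n) ≤ s)
    (hB : (cnt a m : ℝ) ≤ 2 / 3 * n) :
    Ex (fun S : Sample n => if Good lam m (stepA a S) (s * (1 + 1 / (12 * lam))) then (0:ℝ) else 1)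
      ≤ 1 / (n : ℝ) ^ 2 := by
  obtain ⟨g1, g2, g3⟩ := hG
  have hne : Nonempty (Fin n) := ⟨⟨0, hn⟩⟩
  have hn' : (0 : ℝ) < n := by exact_mod_cast hn
  have hs0 : 0 ≤ s := le_trans (by positivity) hs
  obtain ⟨p, hp⟩ : ∃ p : ℝ, p = cnt a m / n := ⟨_, rfl⟩
  obtain ⟨σ, hσ⟩ : ∃ σ : ℝ, σ = s / n := ⟨_, rfl⟩
  have ep : (cnt a m : ℝ) = n * p := by rw [hp]; field_simp
  have es : s = n * σ := by rw [hσ]; field_simp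
  have hσ0 : 0 ≤ σ := by rw [hσ]; positivity
  have hp0 : 0 ≤ p := by rw [hp]; positivity
  have hσp : σ ≤ p := by rw [hp, hσ]; gcongr
  have hp23 : p ≤ 2 / 3 := by rw [hp, div_le_iff₀ hn']; linarith
  have hlp : 1 ≤ lam * p := by
    rw [div_le_iff₀ (by linarith), ep] at g1
    have : n * 1 ≤ n * (lam * p) := by linarith
    exact le_of_mul_le_mul_left this hn'
  have hQ1 : Q a / n ^ 2 ≤ p ^ 2 + (p - σ) * (1 - p) := by
    rw [div_le_iff₀ (by positivity)]
    have := Q_le a m (cnt a m - s) (fun j hj => by linarith [g3 j hj])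
    rw [ep, es] at this
    linarith
  have hQ2 : p ^ 2 ≤ Q a / n ^ 2 := by
    rw [le_div_iff₀ (by positivity)]
    have := le_Q a m
    rw [ep] at this
    linarith
  have hEb := exp_bound hn hl hlp (by rw [← es]; exact hs)
  have hEm : Ex (ind a m) = p * (1 + p - Q a / n ^ 2) := by rw [Ex_ind hn, hp]
  -- event for `m`
  have bm : Ex (fun S : Sample n => if ∑ i, ind a m (S i) ≤ n * (p + σ * p / 12) then (1:ℝ) else 0)
      ≤ 1 / (n : ℝ) ^ 3 := by
    refine le_trans (chern n (ind a m) (ind_abs a m) (σ / 20) (p + σ * p / 3) (5 / 2 * p) _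
      (by linarith) (by linarith) ?_ ?_) (le_trans (Real.exp_le_exp.2 (le_of_eq ?_)) hEb)
    · rw [hEm]; exact num_top hp0 hσ0 hp23 hQ1
    · simp_rw [ind_sq]
      rw [hEm]
      have := num_var hp0 le_rfl (by linarith) hQ2
      linarith
    · ring
  have bj : ∀ j, j ≠ m → Ex (fun S : Sample n =>
      if ∑ i, (ind a m (S i) - ind a j (S i)) ≤ n * (σ * (1 + p / 12)) then (1:ℝ) else 0)
      ≤ 1 / (n : ℝ) ^ 3 := by
    intro j hj
    obtain ⟨q, hq⟩ : ∃ q : ℝ, q = cnt a j / n := ⟨_, rfl⟩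
    have eq : (cnt a j : ℝ) = n * q := by rw [hq]; field_simp
    have hq0 : 0 ≤ q := by rw [hq]; positivity
    have hEj : Ex (ind a j) = q * (1 + q - Q a / n ^ 2) := by rw [Ex_ind hn, hq]
    have hd : σ ≤ p - q := by
      have := g3 j hj
      rw [ep, eq, es] at this
      have : n * σ ≤ n * (p - q) := by linarith
      exact le_of_mul_le_mul_left this hn'
    refine le_trans (chern n (fun t => ind a m t - ind a j t) ?_ (σ / 20) (σ * (1 + p / 3))
      (5 / 2 * p) _ (by linarith) (by linarith) ?_ ?_)
      (le_trans (Real.exp_le_exp.2 (le_of_eq ?_)) hEb)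
    · intro t
      rw [abs_le]
      constructor <;> linarith [ind_nonneg a m t, ind_nonneg a j t, ind_le a m t, ind_le a j t]
    · rw [Ex_sub, hEm, hEj]
      exact num_diff hd hq0 hσ0 hp23 hQ1
    · have : (fun t => (ind a m t - ind a j t) ^ 2) = fun t => ind a m t + ind a j t := by
        funext t
        have := ind_mul a hj t
        nlinarith [ind_sq a m t, ind_sq a j t]
      rw [this, Ex_add, hEm, hEj]
      have h1 := num_var hp0 le_rfl (by linarith) hQ2
      have h2 := num_var hq0 (by linarith : q ≤ p) (by linarith) hQ2
      linarith
    · ring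
  -- union bound
  let J : Finset (Fin k) := (Finset.univ.image a).erase m
  have hJ : (J.card : ℝ) + 1 ≤ n := by
    have hm : m ∈ Finset.univ.image a := by
      by_contra h
      have : cnt a m = 0 := by
        unfold cnt
        rw [Finset.card_eq_zero, Finset.filter_eq_empty_iff]
        intro i _ hi
        exact h (Finset.mem_image.2 ⟨i, Finset.mem_univ _, hi⟩)
      rw [this] at hp
      simp at hp
      rw [hp] at hlp
      linarith
    have h1 : J.card + 1 = (Finset.univ.image a).card := Finset.card_erase_add_one hm
    have h2 : (Finset.univ.image a).card ≤ n := Finset.card_image_le.trans (by simp)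
    exact_mod_cast h1 ▸ h2
  calc _ ≤ Ex (fun S : Sample n =>
        (if ∑ i, ind a m (S i) ≤ n * (p + σ * p / 12) then (1:ℝ) else 0) + ∑ j ∈ J,
        if ∑ i, (ind a m (S i) - ind a j (S i)) ≤ n * (σ * (1 + p / 12)) then (1:ℝ) else 0) := by
        apply Ex_mono
        intro S
        have hpos : ∀ j ∈ J, (0:ℝ) ≤ if ∑ i, (ind a m (S i) - ind a j (S i)) ≤ n * (σ * (1 + p / 12)) then (1:ℝ) else 0 := by
          intro j _
          split_ifs <;> norm_num
        have hsum := Finset.sum_nonneg hpos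
        by_cases h1 : ∑ i, ind a m (S i) ≤ n * (p + σ * p / 12)
        · rw [if_pos h1]
          split_ifs <;> linarith
        rw [if_neg h1, zero_add]
        by_cases h2 : ∃ j ∈ J, ∑ i, (ind a m (S i) - ind a j (S i)) ≤ n * (σ * (1 + p / 12))
        · obtain ⟨j, hj, h⟩ := h2
          have := Finset.single_le_sum hpos hj
          rw [if_pos h] at this
          split_ifs <;> linarith
        have hgood : Good lam m (stepA a S) (s * (1 + 1 / (12 * lam))) := by
          push Not at h1 h2
          rw [← cnt_step] at h1
          have hlam : 1 / lam ≤ p := by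
            rw [div_le_iff₀ (by linarith)]; linarith
          have e12 : 1 / (12 * lam) ≤ p / 12 := by
            have : 1 / (12 * lam) = 1 / lam / 12 := by field_simp
            linarith
          have hthr : s * (1 + 1 / (12 * lam)) ≤ n * (σ * (1 + p / 12)) := by
            rw [es]
            have : 0 ≤ n * σ := by positivity
            nlinarith
          have hthr2 : n * (σ * (1 + p / 12)) ≤ n * (p + σ * p / 12) := by
            apply mul_le_mul_of_nonneg_left _ hn'.le
            nlinarith
          have hge : (cnt a m : ℝ) ≤ cnt (stepA a S) m := by
            rw [ep]
            have : 0 ≤ n * (σ * p / 12) := by positivity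
            linarith
          refine ⟨g1.trans hge, by linarith, ?_⟩
          intro j hj
          by_cases hjJ : j ∈ J
          · have := h2 j hjJ
            rw [Finset.sum_sub_distrib, ← cnt_step, ← cnt_step] at this
            linarith
          · have : cnt (stepA a S) j = 0 := by
              unfold cnt
              rw [Finset.card_eq_zero, Finset.filter_eq_empty_iff]
              intro i _ hi
              apply hjJ
              refine Finset.mem_erase.2 ⟨hj, Finset.mem_image.2 ?_⟩
              unfold stepA maj3 at hi
              split_ifs at hi
              · exact ⟨_, Finset.mem_univ _, hi⟩
              · exact ⟨_, Finset.mem_univ _, hi⟩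
            rw [this, Nat.cast_zero, zero_add]
            exact hthr.trans (hthr2.trans h1.le)
        rw [if_pos hgood]
        exact hsum
    _ ≤ 1 / (n : ℝ) ^ 3 + ∑ j ∈ J, 1 / (n : ℝ) ^ 3 := by
        rw [Ex_add, Ex_sum]
        exact add_le_add bm (Finset.sum_le_sum fun j hj => bj j (Finset.ne_of_mem_erase hj))
    _ = (J.card + 1) * (1 / (n : ℝ) ^ 3) := by
        rw [Finset.sum_const, nsmul_eq_mul]; ring
    _ ≤ n * (1 / (n : ℝ) ^ 3) := by gcongr
    _ = _ := by field_simp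

/-- number of non-`m` nodes -/
noncomputable def Bn (m : Fin k) (a : Fin n → Fin k) : ℝ := n - cnt a m

lemma Bn_nonneg (m : Fin k) (a : Fin n → Fin k) : 0 ≤ Bn m a := by
  have : (cnt a m : ℝ) ≤ n := by exact_mod_cast cnt_le a m
  unfold Bn
  linarith

lemma Bn_step (m : Fin k) (a : Fin n → Fin k) (S : Sample n) :
    Bn m (stepA a S) = ∑ i, (1 - ind a m (S i)) := by
  rw [Finset.sum_sub_distrib, ← cnt_step]
  simp [Bn]

lemma Ex_nind (hn : 0 < n) (m : Fin k) (a : Fin n → Fin k) (hB : Bn m a ≤ n / 3) :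
    Ex (fun t => 1 - ind a m t) ≤ 7 / 9 * (Bn m a / n) := by
  have hne : Nonempty (Fin n) := ⟨⟨0, hn⟩⟩
  have hn' : (0 : ℝ) < n := by exact_mod_cast hn
  obtain ⟨q, hq⟩ : ∃ q : ℝ, q = Bn m a / n := ⟨_, rfl⟩
  have eB : Bn m a = n * q := by rw [hq]; field_simp
  have hq0 : 0 ≤ q := by
    have := Bn_nonneg m a
    rw [hq]; positivity
  have hq3 : q ≤ 1 / 3 := by
    rw [hq, div_le_iff₀ hn']; linarith
  have ec : (cnt a m : ℝ) = n * (1 - q) := by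
    have : (cnt a m : ℝ) = n - Bn m a := by unfold Bn; ring
    rw [this, eB]; ring
  have hQ : Q a / n ^ 2 ≤ (1 - q) ^ 2 + q ^ 2 := by
    rw [div_le_iff₀ (by positivity)]
    have := Q_le a m (Bn m a) (fun j hj => by
      have h : cnt a j + cnt a m ≤ n := by
        unfold cnt
        rw [← Finset.card_union_of_disjoint]
        · exact (Finset.card_le_univ _).trans (by simp)
        · rw [Finset.disjoint_filter]
          intro i _ h1 h2
          exact hj (h1.symm.trans h2)
      have h' : (cnt a j : ℝ) + cnt a m ≤ n := by exact_mod_cast h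
      unfold Bn
      linarith)
    rw [eB, ec] at this
    linarith
  rw [Ex_sub, Ex_const, Ex_ind hn, ec, ← hq]
  have e : n * (1 - q) / n = 1 - q := by field_simp
  rw [e]
  have h1 : 1 + q * (1 - 2 * q) ≤ 1 + (1 - q) - Q a / n ^ 2 := by linarith
  have h2 := mul_le_mul_of_nonneg_left h1 (by linarith : 0 ≤ 1 - q)
  nlinarith [mul_nonneg hq0 (by linarith : 0 ≤ 1/3 - q), mul_nonneg (mul_nonneg hq0 (by linarith : 0 ≤ 1/3 - q)) (by linarith : 0 ≤ 1 - q)]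

lemma Ex_Bn (hn : 0 < n) (m : Fin k) (a : Fin n → Fin k) (hB : Bn m a ≤ n / 3) :
    Ex (fun S : Sample n => Bn m (stepA a S)) ≤ 7 / 9 * Bn m a := by
  have hne : Nonempty (Fin n) := ⟨⟨0, hn⟩⟩
  have hn' : (0 : ℝ) < n := by exact_mod_cast hn
  have h := Ex_nind hn m a hB
  simp_rw [Bn_step]
  rw [Ex_sum]
  have : ∀ i : Fin n, Ex (fun S : Sample n => 1 - ind a m (S i)) = Ex (fun t => 1 - ind a m t) :=
    fun i => Ex_coord i (fun t => 1 - ind a m t)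
  simp_rw [this]
  simp only [Finset.sum_const, Finset.card_univ, Fintype.card_fin, nsmul_eq_mul]
  calc _ ≤ n * (7 / 9 * (Bn m a / n)) := by gcongr
    _ = _ := by field_simp

open Classical in
lemma big_step (hn : 0 < n) (hexp : Real.exp (-(n / 189 : ℝ)) ≤ 1 / (n : ℝ) ^ 2)
    (m : Fin k) (a : Fin n → Fin k) (hB : Bn m a ≤ n / 3) :
    Ex (fun S : Sample n => if Bn m (stepA a S) ≤ n / 3 then (0:ℝ) else 1) ≤ 1 / (n : ℝ) ^ 2 := by
  have hne : Nonempty (Fin n) := ⟨⟨0, hn⟩⟩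
  have hn' : (0 : ℝ) < n := by exact_mod_cast hn
  have h := Ex_nind hn m a hB
  have hb : Bn m a / n ≤ 1 / 3 := by
    rw [div_le_iff₀ hn']; linarith
  have hE : Ex (fun t => 1 - ind a m t) ≤ 7 / 27 := by linarith
  have hc := chern n (fun t => -(1 - ind a m t)) (fun t => by
    rw [abs_neg, abs_le]
    constructor <;> linarith [ind_nonneg a m t, ind_le a m t]) (1 / 7) (-(7 / 27)) (7 / 27)
    (-(n / 3)) (by norm_num) (by norm_num) (by
      have : Ex (fun t => -(1 - ind a m t)) = - Ex (fun t => 1 - ind a m t) := by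
        have := Ex_mul (-1) (fun t => 1 - ind a m t)
        simpa using this
      rw [this]; linarith) (by
      have : (fun t => (-(1 - ind a m t)) ^ 2) = fun t => 1 - ind a m t := by
        funext t
        nlinarith [ind_sq a m t]
      rw [this]; exact hE)
  refine le_trans (Ex_mono ?_) (hc.trans (le_trans (Real.exp_le_exp.2 (le_of_eq ?_)) hexp))
  · intro S
    rw [Finset.sum_neg_distrib, ← Bn_step]
    by_cases h1 : Bn m (stepA a S) ≤ n / 3
    · rw [if_pos h1]; split_ifs <;> norm_num
    · rw [if_neg h1, if_pos (by linarith)]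
  · ring

lemma F_le_one (hn : 0 < n) (m : Fin k) (N : ℕ) (a : Fin n → Fin k) : F m N a ≤ 1 := by
  have hne : Nonempty (Fin n) := ⟨⟨0, hn⟩⟩
  induction N generalizing a with
  | zero =>
    rw [F]
    split_ifs <;> norm_num
  | succ N ih =>
    rw [F]
    exact (Ex_mono fun S => ih _).trans (Ex_const 1).le

lemma phase2 (hn : 0 < n) (hexp : Real.exp (-(n / 189 : ℝ)) ≤ 1 / (n : ℝ) ^ 2)
    (m : Fin k) (N : ℕ) (a : Fin n → Fin k) (hB : Bn m a ≤ n / 3) :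
    F m N a ≤ N * (1 / (n : ℝ) ^ 2) + (7 / 9) ^ N * Bn m a := by
  classical
  have hne : Nonempty (Fin n) := ⟨⟨0, hn⟩⟩
  induction N generalizing a with
  | zero =>
    rw [F]
    split_ifs with h
    · simpa using Bn_nonneg m a
    · have h1 : cnt a m + 1 ≤ n := lt_of_le_of_ne (cnt_le a m) h
      have h2 : (cnt a m : ℝ) + 1 ≤ n := by exact_mod_cast h1
      simp [Bn]
      linarith
  | succ N ih =>
    rw [F]
    calc _ ≤ Ex (fun S : Sample n => (if Bn m (stepA a S) ≤ n / 3 then (0:ℝ) else 1) +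
          (N * (1 / (n : ℝ) ^ 2) + (7 / 9) ^ N * Bn m (stepA a S))) := by
          apply Ex_mono
          intro S
          split_ifs with h
          · rw [zero_add]; exact ih _ h
          · have h1 := F_le_one hn m N (stepA a S)
            have h2 := Bn_nonneg m (stepA a S)
            have : 0 ≤ N * (1 / (n : ℝ) ^ 2) + (7 / 9) ^ N * Bn m (stepA a S) := by positivity
            linarith
      _ ≤ 1 / (n : ℝ) ^ 2 + (N * (1 / (n : ℝ) ^ 2) + (7 / 9) ^ N * (7 / 9 * Bn m a)) := by
          rw [Ex_add, Ex_add, Ex_const, Ex_mul]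
          have := Ex_Bn hn m a hB
          gcongr
          exact big_step hn hexp m a hB
      _ = _ := by push_cast; ring

lemma phase1 (hn : 0 < n) (hexp : Real.exp (-(n / 189 : ℝ)) ≤ 1 / (n : ℝ) ^ 2)
    {lam : ℝ} (hl : 3 ≤ lam) (m : Fin k) (N I : ℕ) (a : Fin n → Fin k) (s : ℝ)
    (hG : Good lam m a s) (hs : 22 * Real.sqrt (lam * n * Real.log n) ≤ s)
    (hI : n < s * (1 + 1 / (12 * lam)) ^ I) :
    F m (N + I) a ≤ (N + I) * (1 / (n : ℝ) ^ 2) + (7 / 9) ^ N * n := by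
  classical
  have hne : Nonempty (Fin n) := ⟨⟨0, hn⟩⟩
  have hs0 : 0 ≤ s := le_trans (by positivity) hs
  induction I generalizing a s with
  | zero =>
    exfalso
    have h1 := hG.2.1
    have h2 : (cnt a m : ℝ) ≤ n := by exact_mod_cast cnt_le a m
    simp at hI
    linarith
  | succ I ih =>
    by_cases hB : Bn m a ≤ n / 3
    · refine (phase2 hn hexp m (N + (I + 1)) a hB).trans ?_
      push_cast
      have h1 : Bn m a ≤ n := by
        unfold Bn
        have : (0 : ℝ) ≤ cnt a m := by positivity
        linarith
      have h2 : ((7:ℝ) / 9) ^ (N + (I + 1)) ≤ (7 / 9) ^ N :=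
        pow_le_pow_of_le_one (by norm_num) (by norm_num) (by omega)
      have := Bn_nonneg m a
      gcongr
    · rw [← add_assoc, F]
      have hc : (cnt a m : ℝ) ≤ 2 / 3 * n := by
        unfold Bn at hB
        linarith
      have hst := good_step hn hl m a s hG hs hc
      have h0 : 0 ≤ 1 / (12 * lam) := by positivity
      calc _ ≤ Ex (fun S : Sample n =>
            (if Good lam m (stepA a S) (s * (1 + 1 / (12 * lam))) then (0:ℝ) else 1) +
            ((N + I) * (1 / (n : ℝ) ^ 2) + (7 / 9) ^ N * n)) := by
            apply Ex_mono
            intro S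
            split_ifs with h
            · rw [zero_add]
              apply ih _ _ h
              · nlinarith
              · rw [mul_assoc, ← pow_succ']
                exact hI
              · nlinarith
            · have h1 := F_le_one hn m (N + I) (stepA a S)
              have : 0 ≤ (N + I) * (1 / (n : ℝ) ^ 2) + (7 / 9) ^ N * n := by positivity
              linarith
        _ ≤ 1 / (n : ℝ) ^ 2 + ((N + I) * (1 / (n : ℝ) ^ 2) + (7 / 9) ^ N * n) := by
            rw [Ex_add, Ex_const]
            gcongr
        _ = _ := by push_cast; ring

end step

lemma ev_exp : ∃ n₀ : ℕ, ∀ n : ℕ, n₀ ≤ n → Real.exp (-(n / 189 : ℝ)) ≤ 1 / (n : ℝ) ^ 2 := by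
  have h := Real.tendsto_pow_mul_exp_neg_atTop_nhds_zero 2
  have h1 : Filter.Tendsto (fun n : ℕ => (n : ℝ) / 189) Filter.atTop Filter.atTop :=
    Filter.Tendsto.atTop_div_const (by norm_num) tendsto_natCast_atTop_atTop
  have h2 := (h.comp h1).eventually (gt_mem_nhds (show (0:ℝ) < 1 / 189 ^ 2 by norm_num))
  obtain ⟨n₀, hn₀⟩ := Filter.eventually_atTop.1 h2
  refine ⟨n₀ + 1, fun n hn => ?_⟩
  have h3 := hn₀ n (by omega)
  simp only [Function.comp] at h3
  have hn' : (0 : ℝ) < n := by exact_mod_cast (by omega : 0 < n)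
  rw [le_div_iff₀ (by positivity)]
  have : ((n : ℝ) / 189) ^ 2 = n ^ 2 / 189 ^ 2 := by rw [div_pow]
  rw [this] at h3
  linarith

end GUB

/-- Theorem (the general upper bound): for all sufficiently large `n` and any `3 ≤ λ < √n`,
if the initial `k`-cd `c̄` satisfies `M(c̄) = {m}`, `c_m ≥ n/λ` and `s(c̄) ≥ 22·√(λ·n·log n)`,
then with probability at least `1 − 110·λ·log n/n²` there is a round `t ≤ 100·λ·log n`
at which all `n` nodes have color `m`. -/
theorem general_upper_bound : ∃ n₀ : ℕ, ∀ n : ℕ, n₀ ≤ n → ∀ lam : ℝ,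
    3 ≤ lam → lam < Real.sqrt n → ∀ k : ℕ, ∀ c : Fin k → ℕ,
    (∑ h, c h = n) → ∀ a : Fin n → Fin k, (∀ h, cnt a h = c h) →
    ∀ m : Fin k, Mset c = {m} → (n : ℝ) / lam ≤ (c m : ℝ) →
    22 * Real.sqrt (lam * (n : ℝ) * Real.log n) ≤ (sval c : ℝ) →
    runPr (⌊100 * lam * Real.log n⌋₊) a
        (fun S => ∃ t : ℕ, (t : ℝ) ≤ 100 * lam * Real.log n ∧ cnt (trajA a S t) m = n) ≥
      1 - 110 * lam * Real.log n / (n : ℝ) ^ 2 := by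
  obtain ⟨n₁, hn₁⟩ := GUB.ev_exp
  refine ⟨n₁ + 3, ?_⟩
  intro n hn lam hl _ k c hc a ha m hM hcm hs
  have hexp := hn₁ n (by omega)
  have hn0 : 0 < n := by omega
  have hn3 : (3 : ℝ) ≤ n := by exact_mod_cast (by omega : 3 ≤ n)
  have hn' : (0 : ℝ) < n := by linarith
  have hL1 : 1 ≤ Real.log n := by
    rw [Real.le_log_iff_exp_le hn']
    have := Real.exp_one_lt_d9
    linarith
  obtain ⟨L, hL⟩ : ∃ L, L = Real.log n := ⟨_, rfl⟩
  have hLn : (n : ℝ) = Real.exp L := by rw [hL, Real.exp_log hn']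
  rw [← hL] at hL1
  have hLL : 3 ≤ lam * L := by nlinarith
  -- initial goodness
  have hmv : c m = mval c := by
    have : m ∈ Mset c := by rw [hM]; simp
    exact (Finset.mem_filter.1 this).2
  have hsv : sval c = mval c - (Finset.univ \ Mset c).sup c := by
    unfold sval
    rw [if_pos (by rw [hM]; simp)]
  have hG : GUB.Good lam m a (sval c : ℝ) := by
    refine ⟨by rw [ha]; exact hcm, ?_, ?_⟩
    · rw [ha, hmv, hsv]
      exact_mod_cast Nat.sub_le _ _
    · intro j hj
      have h1 : c j ≤ (Finset.univ \ Mset c).sup c :=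
        Finset.le_sup (f := c) (by rw [hM]; simp [hj])
      have h2 : (Finset.univ \ Mset c).sup c ≤ mval c :=
        Finset.sup_mono (Finset.subset_univ _)
      have h3 : c j + sval c ≤ c m := by
        rw [hsv, hmv]; omega
      rw [ha, ha]
      exact_mod_cast h3
  have hs1 : (1 : ℝ) < sval c := by
    have : (1 : ℝ) ≤ Real.sqrt (lam * n * Real.log n) := by
      rw [Real.one_le_sqrt, ← hL]
      nlinarith
    linarith
  -- times
  obtain ⟨T, hT⟩ : ∃ T, T = ⌊100 * lam * Real.log n⌋₊ := ⟨_, rfl⟩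
  obtain ⟨I, hI⟩ : ∃ I, I = ⌊50 * lam * L⌋₊ := ⟨_, rfl⟩
  have hT1 : (T : ℝ) ≤ 100 * lam * L := by
    rw [hT, ← hL]; exact Nat.floor_le (by nlinarith)
  have hT2 : 100 * lam * L < T + 1 := by
    rw [hT, ← hL]; exact Nat.lt_floor_add_one _
  have hI1 : (I : ℝ) ≤ 50 * lam * L := by
    rw [hI]; exact Nat.floor_le (by nlinarith)
  have hI2 : 50 * lam * L < I + 1 := by
    rw [hI]; exact Nat.lt_floor_add_one _
  have hIT : I ≤ T := by
    have : (I : ℝ) < T + 1 := by linarith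
    exact Nat.lt_succ_iff.1 (by exact_mod_cast this)
  obtain ⟨N, hN⟩ : ∃ N, T = N + I := ⟨T - I, by omega⟩
  have hNr : (T : ℝ) = N + I := by exact_mod_cast hN
  have hgrow : (n : ℝ) ≤ (1 + 1 / (12 * lam)) ^ I := by
    have hx : 0 < 1 + 1 / (12 * lam) := by positivity
    rw [← Real.exp_log hx, ← Real.exp_nat_mul, hLn]
    apply Real.exp_le_exp.2
    have h1 := Real.one_sub_inv_le_log_of_pos hx
    have h2 : 1 - (1 + 1 / (12 * lam))⁻¹ = 1 / (12 * lam + 1) := by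
      field_simp
      ring
    rw [h2] at h1
    have h3 : 1 / (13 * lam) ≤ 1 / (12 * lam + 1) := by
      apply one_div_le_one_div_of_le <;> linarith
    have h4 : (I : ℝ) * (1 / (13 * lam)) ≤ I * Real.log (1 + 1 / (12 * lam)) := by
      gcongr; linarith
    refine le_trans ?_ h4
    rw [mul_one_div, le_div_iff₀ (by positivity)]
    nlinarith
  have hI' : n < (sval c : ℝ) * (1 + 1 / (12 * lam)) ^ I := by
    nlinarith
  have hF := GUB.phase1 hn0 hexp hl m N I a _ hG hs hI'
  have hdec : ((7:ℝ) / 9) ^ N * n ≤ 1 / (n : ℝ) ^ 2 := by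
    have h1 : ((7:ℝ) / 9) ^ N ≤ Real.exp (-(3 * L)) := by
      have : (7:ℝ) / 9 ≤ Real.exp (-(2 / 9)) := by
        have := Real.add_one_le_exp (-(2 / 9 : ℝ))
        linarith
      calc ((7:ℝ) / 9) ^ N ≤ (Real.exp (-(2 / 9))) ^ N := by gcongr
        _ = Real.exp (N * (-(2 / 9))) := by rw [Real.exp_nat_mul]
        _ ≤ _ := by
          apply Real.exp_le_exp.2
          nlinarith
    have h2 : Real.exp (-(3 * L)) = 1 / (n : ℝ) ^ 3 := by
      rw [Real.exp_neg, show 3 * L = ((3 : ℕ) : ℝ) * L by norm_num,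
        Real.exp_nat_mul, ← hLn]
      simp
    rw [h2] at h1
    calc _ ≤ 1 / (n : ℝ) ^ 3 * n := by gcongr
      _ = _ := by field_simp
  rw [← hT]
  have hrun := GUB.runPr_ge hn0 m T a
    (fun S => ∃ t : ℕ, (t : ℝ) ≤ 100 * lam * Real.log n ∧ cnt (trajA a S t) m = n)
    (fun S h => ⟨T, by rw [← hL]; exact hT1, h⟩)
  refine ge_iff_le.2 (le_trans ?_ hrun)
  rw [← hN] at hF
  rw [← hL]
  have h5 : ((N : ℝ) + I) * (1 / (n : ℝ) ^ 2) + 1 / (n : ℝ) ^ 2 ≤ 110 * lam * L / (n : ℝ) ^ 2 := by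
    rw [← hNr, mul_one_div, ← add_div]
    gcongr
    nlinarith
  linarith
end

section
/- There exists n₀ such that for all n ≥ n₀ the following holds. Let λ = min{2k, (n/log n)^{1/3}}. If the initial configuration C_0 = c̄ is a k-cd for n nodes such that, for some m ∈ [k], M(c̄) = {m} and s(c̄) ≥ 22·√(λ·n·log n), then with probability at least 1 − 110·λ·log n / n², within 100·λ·log n rounds of the 3-majority dynamics every node has color m (i.e., there is a round t ≤ 100·λ·log n with C_{m,t} = n). -/
open Finset

section Aux

noncomputable def Ex {Ω : Type} [Fintype Ω] (f : Ω → ℝ) : ℝ := (∑ w, f w) / (Fintype.card Ω : ℝ)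

lemma Ex_mono {Ω : Type} [Fintype Ω] {f g : Ω → ℝ} (h : ∀ w, f w ≤ g w) : Ex f ≤ Ex g := by
  unfold Ex
  gcongr with w
  exact h w

lemma Ex_add {Ω : Type} [Fintype Ω] (f g : Ω → ℝ) : Ex (fun w => f w + g w) = Ex f + Ex g := by
  unfold Ex
  rw [Finset.sum_add_distrib, add_div]

lemma Ex_mul {Ω : Type} [Fintype Ω] (c : ℝ) (f : Ω → ℝ) : Ex (fun w => c * f w) = c * Ex f := by
  unfold Ex
  rw [← Finset.mul_sum, mul_div_assoc]

lemma Ex_const {Ω : Type} [Fintype Ω] [Nonempty Ω] (c : ℝ) : Ex (fun _ : Ω => c) = c := by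
  unfold Ex
  have : (Fintype.card Ω : ℝ) ≠ 0 := by exact_mod_cast Fintype.card_ne_zero
  simp only [Finset.sum_const, Finset.card_univ, nsmul_eq_mul]
  field_simp

lemma Ex_sum {Ω ι : Type} [Fintype Ω] (s : Finset ι) (f : ι → Ω → ℝ) :
    Ex (fun w => ∑ i ∈ s, f i w) = ∑ i ∈ s, Ex (f i) := by
  unfold Ex
  rw [Finset.sum_comm, Finset.sum_div]

lemma Ex_prod {Ω : Type} [Fintype Ω] (n : ℕ) (g : Ω → ℝ) :
    Ex (fun S : Fin n → Ω => ∏ i, g (S i)) = (Ex g) ^ n := by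
  unfold Ex
  rw [div_pow, Fintype.sum_pow]
  simp

lemma Ex_coord {Ω : Type} [Fintype Ω] [Nonempty Ω] (n : ℕ) (i : Fin n) (g : Ω → ℝ) :
    Ex (fun S : Fin n → Ω => g (S i)) = Ex g := by
  unfold Ex
  have h1 : ∑ S : Fin n → Ω, g (S i) = (Fintype.card ({j : Fin n // j ≠ i} → Ω) : ℝ) * ∑ w, g w := by
    rw [Fintype.sum_equiv (Equiv.funSplitAt i Ω) (fun S => g (S i)) (fun p => g p.1) (fun S => rfl)]
    rw [Fintype.sum_prod_type]
    simp [Finset.mul_sum]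
  have h2 : (Fintype.card (Fin n → Ω) : ℝ) = (Fintype.card ({j : Fin n // j ≠ i} → Ω) : ℝ) * Fintype.card Ω := by
    rw [Fintype.card_congr (Equiv.funSplitAt i Ω), Fintype.card_prod]; push_cast; ring
  rw [h1, h2]
  have : (Fintype.card ({j : Fin n // j ≠ i} → Ω) : ℝ) ≠ 0 := by exact_mod_cast Fintype.card_ne_zero
  rw [mul_div_mul_left _ _ this]

lemma Ex_cons {Ω : Type} [Fintype Ω] (N : ℕ) (f : (Fin (N+1) → Ω) → ℝ) :
    Ex f = Ex (fun s : Ω => Ex (fun S : Fin N → Ω => f (Fin.cons s S))) := by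
  unfold Ex
  rw [← Finset.sum_div, div_div]
  congr 1
  · rw [← Fintype.sum_equiv (Fin.consEquiv (fun _ : Fin (N+1) => Ω)) (fun p => f (Fin.cons p.1 p.2)) f (fun S => rfl)]
    rw [Fintype.sum_prod_type]
  · simp [pow_succ]

noncomputable def ind (p : Prop) : ℝ := open Classical in if p then 1 else 0

lemma ind_nonneg (p : Prop) : 0 ≤ ind p := by unfold ind; split_ifs <;> norm_num
lemma ind_le_one (p : Prop) : ind p ≤ 1 := by unfold ind; split_ifs <;> norm_num
lemma ind_true {p : Prop} (h : p) : ind p = 1 := by unfold ind; simp [h]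
lemma ind_false {p : Prop} (h : ¬ p) : ind p = 0 := by unfold ind; simp [h]

lemma card_Ex {Ω : Type} [Fintype Ω] (E : Ω → Prop) :
    (Nat.card {S : Ω // E S} : ℝ) / (Nat.card Ω : ℝ) = Ex (fun w => ind (E w)) := by
  classical
  unfold Ex ind
  rw [Nat.card_eq_fintype_card, Nat.card_eq_fintype_card, Fintype.card_subtype]
  congr 1
  rw [Finset.sum_boole]

/-! analytic facts -/

lemma Q_le {k : ℕ} (x : Fin k → ℝ) (m : Fin k) (g : ℝ) (h0 : ∀ j, 0 ≤ x j) (h1 : ∑ j, x j = 1)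
    (hg : ∀ j, j ≠ m → x j + g ≤ x m) :
    ∑ j, x j ^ 2 ≤ x m ^ 2 + (1 - x m) * (x m - g) := by
  rw [← Finset.add_sum_erase _ _ (Finset.mem_univ m)] at h1 ⊢
  have : ∑ j ∈ univ.erase m, x j ^ 2 ≤ ∑ j ∈ univ.erase m, x j * (x m - g) := by
    apply Finset.sum_le_sum
    intro j hj
    have := hg j (Finset.ne_of_mem_erase hj)
    nlinarith [h0 j]
  rw [← Finset.sum_mul] at this
  have e : ∑ j ∈ univ.erase m, x j = 1 - x m := by linarith
  rw [e] at this
  linarith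

lemma drift (xm xj Q g : ℝ) (h0 : 0 ≤ xj) (hg0 : 0 ≤ g) (hm : xm ≤ 1) (hg : xj + g ≤ xm)
    (hQ : Q ≤ xm ^ 2 + (1 - xm) * (xm - g)) :
    g * (1 + xm * (1 - g)) ≤ xm * (1 + xm - Q) - xj * (1 + xj - Q) := by
  have h1 : (xm - xj) * (1 + xj + (1 - xm) * g) ≤ xm * (1 + xm - Q) - xj * (1 + xj - Q) := by
    nlinarith
  refine le_trans ?_ h1
  have e : (xm - xj) * (1 + xj + (1 - xm) * g) - g * (1 + xm * (1 - g))
    = (xm - xj - g) * (1 - xm * g + xj) := by ring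
  have : 0 ≤ (xm - xj - g) * (1 - xm * g + xj) := by
    apply mul_nonneg (by linarith)
    nlinarith
  linarith

lemma psum (xm xj Q : ℝ) (h0 : 0 ≤ xj) (hm : xm ≤ 1) (hg : xj ≤ xm)
    (hQ : xm ^ 2 ≤ Q) : xm * (1 + xm - Q) + xj * (1 + xj - Q) ≤ 5 / 2 * xm := by
  have h1 : xm * (1 + xm - Q) ≤ 5/4 * xm := by
    have : 1 + xm - Q ≤ 5/4 := by nlinarith [sq_nonneg (xm - 1/2)]
    nlinarith
  have h2 : xj * (1 + xj - Q) ≤ 5/4 * xj := by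
    have : 1 + xj - Q ≤ 5/4 := by nlinarith [sq_nonneg (xm - 1/2)]
    nlinarith
  nlinarith

lemma contr (xm Q g : ℝ) (hg0 : 0 ≤ g) (hm : xm ≤ 1) (hg : g ≤ xm)
    (hQ : Q ≤ xm ^ 2 + (1 - xm) * (xm - g)) :
    1 - xm * (1 + xm - Q) ≤ (1 - xm) * (1 - g ^ 2) := by
  have : xm * (1 + (1 - xm) * g) ≤ xm * (1 + xm - Q) := by
    apply mul_le_mul_of_nonneg_left _ (by linarith); nlinarith
  nlinarith [mul_nonneg (mul_nonneg hg0 (sub_nonneg.2 hg)) (sub_nonneg.2 hm)]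

/-! one-step law -/

noncomputable def X {n k : ℕ} (a : Fin n → Fin k) (j : Fin k) : ℝ := (cnt a j : ℝ) / n

lemma cnt_eq {n k : ℕ} (a : Fin n → Fin k) (j : Fin k) :
    (cnt a j : ℝ) = ∑ i, ind (a i = j) := by
  unfold cnt
  rw [Finset.card_filter]
  push_cast
  refine Finset.sum_congr rfl fun i _ => ?_
  unfold ind
  by_cases h : a i = j <;> simp [h]

lemma sum_cnt {n k : ℕ} (a : Fin n → Fin k) : ∑ j, (cnt a j : ℝ) = n := by
  simp_rw [cnt_eq]
  rw [Finset.sum_comm]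
  have : ∀ i, ∑ j, ind (a i = j) = 1 := by
    intro i
    rw [Finset.sum_eq_single (a i)]
    · exact ind_true rfl
    · intro b _ hb; exact ind_false (Ne.symm hb)
    · simp
  simp [this]

lemma X_nonneg {n k : ℕ} (a : Fin n → Fin k) (j : Fin k) : 0 ≤ X a j := by unfold X; positivity

lemma sum_X {n k : ℕ} (hn : 0 < n) (a : Fin n → Fin k) : ∑ j, X a j = 1 := by
  unfold X
  rw [← Finset.sum_div, sum_cnt, div_self]
  positivity

lemma X_le_one {n k : ℕ} (hn : 0 < n) (a : Fin n → Fin k) (j : Fin k) : X a j ≤ 1 := by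
  rw [← sum_X hn a]
  exact Finset.single_le_sum (fun i _ => X_nonneg a i) (Finset.mem_univ j)

noncomputable def mj {n k : ℕ} (a : Fin n → Fin k) (w : Fin n × Fin n × Fin n) : Fin k :=
  maj3 (a w.1) (a w.2.1) (a w.2.2)

lemma sum_pair {n k : ℕ} (a : Fin n → Fin k) :
    ∑ v, ∑ w, ind (a v = a w) = ∑ j, (cnt a j : ℝ) ^ 2 := by
  simp_rw [sq, cnt_eq, Finset.sum_mul_sum]
  rw [Finset.sum_comm]
  rw [Finset.sum_comm (s := (univ : Finset (Fin k)))]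
  refine Finset.sum_congr rfl fun v _ => ?_
  rw [Finset.sum_comm]
  refine Finset.sum_congr rfl fun w _ => ?_
  unfold ind
  simp [eq_comm]

lemma law {n k : ℕ} (hn : 0 < n) (a : Fin n → Fin k) (j : Fin k) :
    Ex (fun w => ind (mj a w = j)) = X a j * (1 + X a j - ∑ h, X a h ^ 2) := by
  have h1 : ∀ u v w, ind (mj a (u, v, w) = j) =
      ind (a v = j) * ind (a w = j) + ind (a u = j) * (1 - ind (a v = a w)) := by
    intro u v w
    unfold mj maj3 ind
    by_cases h1 : a v = a w
    · simp [h1]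
    · by_cases h2 : a v = j
      · subst h2; simp [h1, Ne.symm h1]
      · simp [h1, h2]
  have h2 : ∑ w, ind (mj a w = j) = n * (cnt a j : ℝ) ^ 2 +
      cnt a j * ((n : ℝ) ^ 2 - ∑ h, (cnt a h : ℝ) ^ 2) := by
    rw [Fintype.sum_prod_type]
    simp_rw [Fintype.sum_prod_type, h1, Finset.sum_add_distrib, ← Finset.mul_sum, ← Finset.sum_mul]
    simp_rw [Finset.sum_sub_distrib]
    rw [sum_pair, ← cnt_eq]
    simp
    ring
  unfold Ex
  rw [h2]
  unfold X
  have : (n : ℝ) ≠ 0 := by positivity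
  simp only [Fintype.card_prod, Fintype.card_fin, div_pow, ← Finset.sum_div]
  push_cast
  field_simp
  ring

lemma cnt_step {n k : ℕ} (a : Fin n → Fin k) (S : Sample n) (j : Fin k) :
    (cnt (stepA a S) j : ℝ) = ∑ i, ind (mj a (S i) = j) := by
  rw [cnt_eq]; rfl

lemma exp_quad (x : ℝ) (h : |x| ≤ 1) : Real.exp x ≤ 1 + x + x ^ 2 := by
  have := (abs_le.1 (Real.abs_exp_sub_one_sub_id_le h)).2
  linarith

lemma mgf {n k : ℕ} (hn : 0 < n) (a : Fin n → Fin k) (m j : Fin k) (hj : j ≠ m) (θ : ℝ)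
    (h0 : 0 ≤ θ) (h1 : θ ≤ 1) (pm pj : ℝ) (hpm : Ex (fun w => ind (mj a w = m)) = pm)
    (hpj : Ex (fun w => ind (mj a w = j)) = pj) :
    Ex (fun S : Sample n => Real.exp (-θ * ((cnt (stepA a S) m : ℝ) - cnt (stepA a S) j))) ≤
      Real.exp (n * (-θ * (pm - pj) + θ ^ 2 * (pm + pj))) := by
  haveI : Nonempty (Fin n) := ⟨⟨0, hn⟩⟩
  have e1 : ∀ S : Sample n, Real.exp (-θ * ((cnt (stepA a S) m : ℝ) - cnt (stepA a S) j)) =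
      ∏ i, Real.exp (-θ * (ind (mj a (S i) = m) - ind (mj a (S i) = j))) := by
    intro S
    rw [← Real.exp_sum, cnt_step, cnt_step, ← Finset.sum_sub_distrib, Finset.mul_sum]
  simp_rw [e1]
  rw [Ex_prod n (fun w => Real.exp (-θ * (ind (mj a w = m) - ind (mj a w = j)))), Real.exp_nat_mul]
  apply pow_le_pow_left₀
  · unfold Ex; positivity
  · have e2 : ∀ w, Real.exp (-θ * (ind (mj a w = m) - ind (mj a w = j))) ≤
        1 + ((-θ + θ ^ 2) * ind (mj a w = m) + (θ + θ ^ 2) * ind (mj a w = j)) := by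
      intro w
      by_cases hm : mj a w = m
      · have : ¬ mj a w = j := by rw [hm]; exact hj.symm
        rw [ind_true hm, ind_false this]
        have := exp_quad (-θ) (by rw [abs_neg, abs_of_nonneg h0]; exact h1)
        simp only [sub_zero, mul_one, mul_zero, add_zero]
        nlinarith
      · by_cases hj' : mj a w = j
        · rw [ind_false hm, ind_true hj']
          have := exp_quad θ (by rw [abs_of_nonneg h0]; exact h1)
          simp only [zero_sub, mul_neg, neg_mul, neg_neg, mul_one, mul_zero, zero_add]
          nlinarith
        · rw [ind_false hm, ind_false hj']
          simp
    refine (Ex_mono e2).trans ?_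
    rw [Ex_add, Ex_add, Ex_mul, Ex_mul, Ex_const, hpm, hpj]
    have := Real.add_one_le_exp (-θ * (pm - pj) + θ ^ 2 * (pm + pj))
    refine le_trans (le_of_eq ?_) this
    ring

def Good {n k : ℕ} (m : Fin k) (g : ℝ) (a : Fin n → Fin k) : Prop :=
  ∀ j, j ≠ m → (cnt a j : ℝ) + g * n ≤ cnt a m

lemma Good.mono {n k : ℕ} {m : Fin k} {g g' : ℝ} {a : Fin n → Fin k} (h : Good m g a)
    (hg : g' ≤ g) : Good m g' a := by
  intro j hj
  have := h j hj
  have h2 : g' * n ≤ g * n := by gcongr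
  linarith

lemma Good.X {n k : ℕ} (hn : 0 < n) {m : Fin k} {g : ℝ} {a : Fin n → Fin k} (h : Good m g a) :
    ∀ j, j ≠ m → X a j + g ≤ X a m := by
  intro j hj
  have := h j hj
  unfold _root_.X
  have hn' : (0 : ℝ) < n := by exact_mod_cast hn
  rw [div_add' _ _ _ hn'.ne']
  gcongr

lemma tail_one {n k : ℕ} (hn : 0 < n) (a : Fin n → Fin k) (m j : Fin k) (hj : j ≠ m) (g : ℝ)
    (g0 : 0 ≤ g) (g1 : g ≤ 1 / 2) (hG : Good m g a) :
    Ex (fun S : Sample n => ind ((cnt (stepA a S) m : ℝ) - cnt (stepA a S) j ≤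
        n * (g * (1 + X a m / 4)))) ≤ Real.exp (- (n * g ^ 2 * X a m / 160)) := by
  set θ := g / 20 with hθ
  have hX := hG.X hn
  have hQ := Q_le (X a) m g (X_nonneg a) (sum_X hn a) hX
  have hQ2 : X a m ^ 2 ≤ ∑ h, X a h ^ 2 :=
    Finset.single_le_sum (f := fun h => X a h ^ 2) (fun i _ => sq_nonneg _) (Finset.mem_univ m)
  have hd := drift (X a m) (X a j) _ g (X_nonneg a j) g0 (X_le_one hn a m) (hX j hj) hQ
  have hs := psum (X a m) (X a j) _ (X_nonneg a j) (X_le_one hn a m) (by linarith [hX j hj]) hQ2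
  have hm := mgf hn a m j hj θ (by positivity) (by rw [hθ]; linarith) _ _ (law hn a m) (law hn a j)
  set pm := X a m * (1 + X a m - ∑ h, X a h ^ 2)
  set pj := X a j * (1 + X a j - ∑ h, X a h ^ 2)
  set τ := (n : ℝ) * (g * (1 + X a m / 4)) with hτ
  have e : ∀ S : Sample n, ind ((cnt (stepA a S) m : ℝ) - cnt (stepA a S) j ≤ τ) ≤
      Real.exp (θ * τ) * Real.exp (-θ * ((cnt (stepA a S) m : ℝ) - cnt (stepA a S) j)) := by
    intro S
    by_cases h : (cnt (stepA a S) m : ℝ) - cnt (stepA a S) j ≤ τ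
    · rw [ind_true h, ← Real.exp_add, Real.one_le_exp_iff]
      have : 0 ≤ θ := by positivity
      nlinarith
    · rw [ind_false h]; positivity
  refine (Ex_mono e).trans ?_
  rw [Ex_mul]
  refine (mul_le_mul_of_nonneg_left hm (Real.exp_pos _).le).trans ?_
  rw [← Real.exp_add, Real.exp_le_exp]
  have hx0 := X_nonneg a m
  have k1 : g * (1 + X a m / 2) ≤ pm - pj := by
    refine le_trans ?_ hd
    have : X a m / 2 ≤ X a m * (1 - g) := by nlinarith
    nlinarith
  have k2 : θ * (g * (1 + X a m / 4)) + (-θ * (pm - pj) + θ ^ 2 * (pm + pj)) ≤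
      - (g ^ 2 * X a m / 160) := by
    have hθ0 : 0 ≤ θ := by positivity
    have a1 : θ * (g * (1 + X a m / 2)) ≤ θ * (pm - pj) := by gcongr
    have a2 : θ ^ 2 * (pm + pj) ≤ θ ^ 2 * (5 / 2 * X a m) := by gcongr
    have a3 : θ * (g * (1 + X a m / 4)) - θ * (g * (1 + X a m / 2)) + θ ^ 2 * (5 / 2 * X a m)
      = - (g ^ 2 * X a m / 160) := by rw [hθ]; ring
    linarith
  have : (0 : ℝ) ≤ n := by positivity
  have := mul_le_mul_of_nonneg_left k2 this
  rw [hτ]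
  linarith

lemma tail_all {n k : ℕ} (hn : 0 < n) (a : Fin n → Fin k) (m : Fin k) (g : ℝ)
    (g0 : 0 ≤ g) (g1 : g ≤ 1 / 2) (hG : Good m g a) (g' : ℝ) (hg' : g' ≤ g * (1 + X a m / 4)) :
    Ex (fun S : Sample n => ind (¬ Good m g' (stepA a S))) ≤
      (n + 1) * Real.exp (- (n * g ^ 2 * X a m / 160)) := by
  classical
  obtain ⟨J, hJc, hJ⟩ : ∃ J : Finset (Fin k), J.card ≤ n + 1 ∧
      ∀ j, ∃ j' ∈ J, (j ≠ m → j' ≠ m) ∧ ∀ S, cnt (stepA a S) j ≤ cnt (stepA a S) j' := by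
    by_cases hex : ∃ j0, j0 ≠ m ∧ ∀ i, a i ≠ j0
    · obtain ⟨j0, hj0m, hj0⟩ := hex
      refine ⟨insert j0 (univ.image a), ?_, ?_⟩
      · refine (Finset.card_insert_le _ _).trans ?_
        have := Finset.card_image_le (s := (univ : Finset (Fin n))) (f := a)
        simp at this ⊢; exact this
      · intro j
        by_cases hj : ∃ i, a i = j
        · obtain ⟨i, hi⟩ := hj
          exact ⟨j, by simp [← hi], fun h => h, fun S => le_rfl⟩
        · push Not at hj
          refine ⟨j0, by simp, fun _ => hj0m, fun S => ?_⟩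
          have : cnt (stepA a S) j = 0 := by
            unfold cnt stepA maj3
            rw [Finset.card_eq_zero, Finset.filter_eq_empty_iff]
            intro i _
            split_ifs
            · exact hj _
            · exact hj _
          omega
    · push Not at hex
      refine ⟨insert m (univ.image a), ?_, ?_⟩
      · refine (Finset.card_insert_le _ _).trans ?_
        have := Finset.card_image_le (s := (univ : Finset (Fin n))) (f := a)
        simp at this ⊢; exact this
      · intro j
        refine ⟨j, ?_, fun h => h, fun S => le_rfl⟩
        by_cases hj : j = m
        · simp [hj]
        · obtain ⟨i, hi⟩ := hex j hj
          simp [← hi]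
  have hb : ∀ S : Sample n, ind (¬ Good m g' (stepA a S)) ≤ ∑ j ∈ J.erase m,
      ind ((cnt (stepA a S) m : ℝ) - cnt (stepA a S) j ≤ n * (g * (1 + X a m / 4))) := by
    intro S
    by_cases h : Good m g' (stepA a S)
    · rw [ind_false (by simpa using h)]
      exact Finset.sum_nonneg fun _ _ => ind_nonneg _
    · rw [ind_true h]
      unfold Good at h
      push Not at h
      obtain ⟨j, hj, hlt⟩ := h
      obtain ⟨j', hj'J, hj'm, hle⟩ := hJ j
      have hle' : (cnt (stepA a S) j : ℝ) ≤ cnt (stepA a S) j' := by exact_mod_cast hle S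
      have h3 : (cnt (stepA a S) m : ℝ) - cnt (stepA a S) j' ≤ n * (g * (1 + X a m / 4)) := by
        have : (n : ℝ) * g' ≤ n * (g * (1 + X a m / 4)) := by gcongr
        nlinarith
      refine le_trans (le_of_eq (ind_true h3).symm) ?_
      exact Finset.single_le_sum (f := fun j => ind ((cnt (stepA a S) m : ℝ) - cnt (stepA a S) j ≤ n * (g * (1 + X a m / 4)))) (fun _ _ => ind_nonneg _) (Finset.mem_erase.2 ⟨hj'm hj, hj'J⟩)
  refine (Ex_mono hb).trans ?_
  rw [Ex_sum]
  refine (Finset.sum_le_card_nsmul _ _ (Real.exp (- (n * g ^ 2 * X a m / 160))) ?_).trans ?_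
  · intro j hj
    exact tail_one hn a m j (Finset.ne_of_mem_erase hj) g g0 g1 hG
  · rw [nsmul_eq_mul]
    gcongr
    have : (J.erase m).card ≤ n + 1 := (Finset.card_erase_le).trans hJc
    exact_mod_cast this

lemma good_le_X {n k : ℕ} (hn : 0 < n) {a : Fin n → Fin k} {m : Fin k} {g : ℝ} (hG : Good m g a) :
    g ≤ X a m ∨ X a m = 1 := by
  by_cases h : ∃ j, j ≠ m
  · obtain ⟨j, hj⟩ := h
    left
    have := hG.X hn j hj
    linarith [X_nonneg a j]
  · push Not at h
    right
    have := sum_X hn a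
    rwa [Finset.sum_eq_single m (fun b _ hb => absurd (h b) hb) (by simp)] at this

lemma exp_cnt {n k : ℕ} (hn : 0 < n) (a : Fin n → Fin k) (m : Fin k) (hG : Good m (1 / 2) a) :
    Ex (fun S : Sample n => (n : ℝ) - cnt (stepA a S) m) ≤ 3 / 4 * (n - cnt a m) := by
  haveI : Nonempty (Fin n) := ⟨⟨0, hn⟩⟩
  have hn' : (0 : ℝ) < n := by exact_mod_cast hn
  have hQ := Q_le (X a) m _ (X_nonneg a) (sum_X hn a) (hG.X hn)
  have hm : (1 / 2 : ℝ) ≤ X a m := by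
    rcases good_le_X hn hG with h | h <;> linarith
  have hc := contr (X a m) _ (1 / 2) (by norm_num) (X_le_one hn a m) hm hQ
  have e : ∀ S : Sample n, (n : ℝ) - cnt (stepA a S) m = n + (-1) * ∑ i, ind (mj a (S i) = m) := by
    intro S; rw [cnt_step]; ring
  simp_rw [e]
  rw [Ex_add, Ex_mul, Ex_sum, Ex_const]
  have : ∀ i : Fin n, Ex (fun S : Sample n => ind (mj a (S i) = m)) =
      X a m * (1 + X a m - ∑ h, X a h ^ 2) := by
    intro i
    rw [← law hn a m]
    exact Ex_coord n i (fun w => ind (mj a w = m))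
  simp_rw [this]
  have hx : (cnt a m : ℝ) = n * X a m := by unfold X; field_simp
  rw [hx]
  simp only [Finset.sum_const, Finset.card_univ, Fintype.card_fin, nsmul_eq_mul]
  nlinarith

noncomputable def Fl {n k : ℕ} (m : Fin k) (N : ℕ) (a : Fin n → Fin k) : ℝ :=
  Ex (fun S : Fin N → Sample n => ind (¬ cnt (trajA a S N) m = n))

lemma traj_cons {n k N : ℕ} (a : Fin n → Fin k) (s : Sample n) (S : Fin N → Sample n) (t : ℕ) :
    trajA (N := N + 1) a (Fin.cons s S : Fin (N + 1) → Sample n) (t + 1) =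
      trajA (stepA a s) S t := by
  induction t with
  | zero => simp [trajA]
  | succ t ih =>
    rw [trajA, ih]
    conv_rhs => rw [trajA]
    by_cases h : t < N
    · have h' : t + 1 < N + 1 := by omega
      rw [dif_pos h, dif_pos h']
      rfl
    · have h' : ¬ t + 1 < N + 1 := by omega
      rw [dif_neg h, dif_neg h']

lemma Fl_succ {n k : ℕ} (m : Fin k) (N : ℕ) (a : Fin n → Fin k) :
    Fl m (N + 1) a = Ex (fun s : Sample n => Fl m N (stepA a s)) := by
  unfold Fl
  rw [Ex_cons]
  simp_rw [traj_cons]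

lemma cnt_le {n k : ℕ} (a : Fin n → Fin k) (m : Fin k) : cnt a m ≤ n := by
  unfold cnt
  exact (Finset.card_filter_le _ _).trans (by simp)

lemma sample_ne {n : ℕ} (hn : 0 < n) : Nonempty (Sample n) := by
  haveI : Nonempty (Fin n) := ⟨⟨0, hn⟩⟩
  infer_instance

lemma Fl_le_one {n k : ℕ} (hn : 0 < n) (m : Fin k) (N : ℕ) (a : Fin n → Fin k) : Fl m N a ≤ 1 := by
  haveI := sample_ne hn
  unfold Fl
  refine (Ex_mono (fun w => ind_le_one _)).trans ?_
  rw [Ex_const]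

lemma Fl_zero {n k : ℕ} (hn : 0 < n) (m : Fin k) (a : Fin n → Fin k) :
    Fl m 0 a ≤ n - cnt a m := by
  haveI := sample_ne hn
  unfold Fl
  simp only [trajA]
  rw [Ex_const]
  have h := cnt_le a m
  by_cases h2 : cnt a m = n
  · rw [ind_false (by simpa using h2), h2]; simp
  · rw [ind_true h2]
    have : cnt a m + 1 ≤ n := by omega
    have : (cnt a m : ℝ) + 1 ≤ n := by exact_mod_cast this
    linarith

lemma phase2 {n k : ℕ} (hn : 0 < n) (m : Fin k) (ε : ℝ) (hε : 0 ≤ ε)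
    (H : ∀ a : Fin n → Fin k, Good m (1 / 2) a →
      Ex (fun S : Sample n => ind (¬ Good m (1 / 2) (stepA a S))) ≤ ε) (T : ℕ) :
    ∀ a : Fin n → Fin k, Good m (1 / 2) a →
      Fl m T a ≤ (n - cnt a m) * (3 / 4 : ℝ) ^ T + T * ε := by
  haveI := sample_ne hn
  induction T with
  | zero => intro a _; simpa using Fl_zero hn m a
  | succ T ih =>
    intro a ha
    rw [Fl_succ]
    have e : ∀ s : Sample n, Fl m T (stepA a s) ≤
        ((3 / 4 : ℝ) ^ T * ((n : ℝ) - cnt (stepA a s) m) + T * ε) +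
          ind (¬ Good m (1 / 2) (stepA a s)) := by
      intro s
      by_cases h : Good m (1 / 2) (stepA a s)
      · have := ih _ h
        have := ind_nonneg (¬ Good m (1 / 2) (stepA a s))
        linarith
      · rw [ind_true h]
        have h1 := Fl_le_one hn m T (stepA a s)
        have h2 : (0 : ℝ) ≤ (n : ℝ) - cnt (stepA a s) m := by
          have : (cnt (stepA a s) m : ℝ) ≤ n := by exact_mod_cast cnt_le _ _
          linarith
        have h3 : 0 ≤ (3 / 4 : ℝ) ^ T * ((n : ℝ) - cnt (stepA a s) m) + T * ε := by positivity
        linarith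
    refine (Ex_mono e).trans ?_
    rw [Ex_add, Ex_add, Ex_mul, Ex_const]
    have h1 := H a ha
    have h2 : (3 / 4 : ℝ) ^ T * Ex (fun S : Sample n => (n : ℝ) - cnt (stepA a S) m) ≤
      (3 / 4 : ℝ) ^ T * (3 / 4 * (n - cnt a m)) :=
      mul_le_mul_of_nonneg_left (exp_cnt hn a m ha) (by positivity)
    rw [pow_succ]
    push_cast
    linarith

lemma phase1 {n k : ℕ} (hn : 0 < n) (m : Fin k) (ε r g0 : ℝ) (hε : 0 ≤ ε) (hr : 0 ≤ r)
    (hg0 : 0 ≤ g0) (hg1 : g0 ≤ 1 / 2)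
    (H : ∀ a : Fin n → Fin k, ∀ g, g0 ≤ g → g ≤ 1 / 2 → Good m g a →
      Ex (fun S : Sample n => ind (¬ Good m (g * (1 + r)) (stepA a S))) ≤ ε) (T t : ℕ) :
    ∀ a : Fin n → Fin k, ∀ g, g0 ≤ g → g ≤ 1 / 2 → 1 / 2 ≤ g * (1 + r) ^ t → Good m g a →
      Fl m (t + T) a ≤ n * (3 / 4 : ℝ) ^ T + (t + T) * ε := by
  haveI := sample_ne hn
  induction t with
  | zero =>
    intro a g h1 h2 h3 h4
    simp at h3
    have hG : Good m (1 / 2) a := h4.mono (by linarith)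
    have := phase2 hn m ε hε (fun a ha => by
      refine le_trans (Ex_mono ?_) (H a (1 / 2) hg1 le_rfl ha)
      intro S
      by_cases h : Good m (1 / 2 * (1 + r)) (stepA a S)
      · rw [ind_false (by simpa using h.mono (by linarith))]
        exact ind_nonneg _
      · rw [ind_true h]; exact ind_le_one _) T a hG
    simp only [Nat.zero_add, Nat.cast_zero, zero_add]
    refine this.trans ?_
    have : (0 : ℝ) ≤ cnt a m * (3 / 4 : ℝ) ^ T := by positivity
    linarith
  | succ t ih =>
    intro a g h1 h2 h3 h4
    rw [show t + 1 + T = (t + T) + 1 by ring, Fl_succ]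
    have e : ∀ s : Sample n, Fl m (t + T) (stepA a s) ≤
        (n * (3 / 4 : ℝ) ^ T + (t + T) * ε) + ind (¬ Good m (g * (1 + r)) (stepA a s)) := by
      intro s
      by_cases h : Good m (g * (1 + r)) (stepA a s)
      · have := ih (stepA a s) (min (1 / 2) (g * (1 + r))) (le_min hg1 (by nlinarith))
          (min_le_left _ _) ?_ (h.mono (min_le_right _ _))
        · have := ind_nonneg (¬ Good m (g * (1 + r)) (stepA a s))
          linarith
        · rcases min_cases (1 / 2) (g * (1 + r)) with h | h
          · rw [h.1]
            have : 1 ≤ (1 + r) ^ t := one_le_pow₀ (by linarith)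
            linarith
          · rw [h.1]
            rw [pow_succ] at h3
            linarith
      · rw [ind_true h]
        have h1 := Fl_le_one hn m (t + T) (stepA a s)
        have h3 : 0 ≤ (n * (3 / 4 : ℝ) ^ T + (t + T) * ε) := by positivity
        linarith
    refine (Ex_mono e).trans ?_
    rw [Ex_add, Ex_const]
    have := H a g h1 h2 h4
    push_cast
    linarith

lemma run_ge {n k N : ℕ} (hn : 0 < n) (a : Fin n → Fin k) (m : Fin k) (B : ℝ) (hB : (N : ℝ) ≤ B) :
    1 - Fl m N a ≤ runPr N a (fun S => ∃ t : ℕ, (t : ℝ) ≤ B ∧ cnt (trajA a S t) m = n) := by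
  haveI := sample_ne hn
  unfold runPr
  rw [card_Ex]
  have : (1 : ℝ) ≤ Ex (fun S : Fin N → Sample n =>
      ind (∃ t : ℕ, (t : ℝ) ≤ B ∧ cnt (trajA a S t) m = n) + ind (¬ cnt (trajA a S N) m = n)) := by
    rw [← Ex_const (Ω := Fin N → Sample n) 1]
    refine Ex_mono fun S => ?_
    by_cases h : cnt (trajA a S N) m = n
    · rw [ind_true (p := ∃ t : ℕ, (t : ℝ) ≤ B ∧ cnt (trajA a S t) m = n) ⟨N, hB, h⟩]
      linarith [ind_nonneg (¬ cnt (trajA a S N) m = n)]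
    · rw [ind_true h]
      linarith [ind_nonneg (∃ t : ℕ, (t : ℝ) ≤ B ∧ cnt (trajA a S t) m = n)]
  rw [Ex_add] at this
  unfold Fl
  linarith

lemma gap_init {k : ℕ} (c : Fin k → ℕ) (m : Fin k) (hM : Mset c = {m}) (j : Fin k) (hj : j ≠ m) :
    c j + sval c ≤ c m := by
  have h1 : c m = mval c := by
    have : m ∈ Mset c := by rw [hM]; simp
    simpa [Mset] using this
  have h2 : c j ≤ (Finset.univ \ Mset c).sup c :=
    Finset.le_sup (f := c) (by rw [hM]; simp [hj])
  have h3 : (Finset.univ \ Mset c).sup c ≤ mval c := Finset.sup_mono (Finset.sdiff_subset)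
  have h4 : sval c = mval c - (Finset.univ \ Mset c).sup c := by
    unfold sval; rw [if_pos]; rw [hM]; simp
  omega

lemma core (n k : ℕ) (L z lam : ℝ) (hn : 2 ≤ n) (hL : L = Real.log n) (hL1 : 1 ≤ L)
    (hz : z ^ 3 * L = n) (hz44 : 44 ≤ z) (hlam : lam = min (2 * (k : ℝ)) z)
    (a : Fin n → Fin k) (m : Fin k)
    (hgap : ∀ j, j ≠ m → (cnt a j : ℝ) + 22 * Real.sqrt (lam * n * L) ≤ cnt a m) :
    Fl m ⌊100 * lam * L⌋₊ a ≤ 110 * lam * L / (n : ℝ) ^ 2 := by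
  have hn0 : 0 < n := by omega
  have hnR : (2 : ℝ) ≤ n := by exact_mod_cast hn
  have hk : 1 ≤ k := by have := m.2; omega
  have hkR : (1 : ℝ) ≤ k := by exact_mod_cast hk
  have hlz : lam ≤ z := hlam ▸ min_le_right _ _
  have hl2 : 2 ≤ lam := by rw [hlam]; exact le_min (by linarith) (by linarith)
  set g0 := 22 * Real.sqrt (lam * L / n) with hg0
  have g0sq : g0 ^ 2 = 484 * (lam * L / n) := by
    rw [hg0, mul_pow, Real.sq_sqrt (by positivity)]; norm_num
  have g0nn : 0 ≤ g0 := by positivity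
  have g0n : g0 * n = 22 * Real.sqrt (lam * n * L) := by
    rw [hg0, mul_assoc]
    congr 1
    rw [show lam * n * L = (lam * L / n) * (n : ℝ) ^ 2 by field_simp,
      Real.sqrt_mul (by positivity), Real.sqrt_sq (by positivity)]
  have g0half : g0 ≤ 1 / 2 := by
    have : g0 ^ 2 ≤ (1 / 2) ^ 2 := by
      rw [g0sq, mul_div_assoc', div_le_iff₀ (by positivity), ← hz]
      have : lam * L ≤ z * L := by gcongr
      have h2 : 1936 * (z * L) ≤ z ^ 2 * (z * L) := by
        apply mul_le_mul_of_nonneg_right _ (by positivity); nlinarith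
      nlinarith
    exact le_of_sq_le_sq this (by norm_num)
  have hG0 : Good m g0 a := by
    intro j hj; rw [g0n]; exact hgap j hj
  have hng : ∀ g, g0 ≤ g → 484 * lam * L ≤ n * g ^ 2 := by
    intro g hg
    have : g0 ^ 2 ≤ g ^ 2 := by gcongr
    rw [g0sq] at this
    calc 484 * lam * L = n * (484 * (lam * L / n)) := by field_simp
      _ ≤ _ := by gcongr
  have hXm : ∀ (a : Fin n → Fin k) (g : ℝ), g0 ≤ g → Good m g a → 2 / lam ≤ X a m := by
    intro a g hg hG
    rcases min_cases (2 * (k : ℝ)) z with h | h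
    · have h1 : ∀ j, X a j ≤ X a m := by
        intro j
        by_cases hj : j = m
        · rw [hj]
        · linarith [hG.X hn0 j hj]
      have h2 := Finset.sum_le_card_nsmul (univ : Finset (Fin k)) (X a) (X a m) (fun j _ => h1 j)
      rw [sum_X hn0 a] at h2
      simp at h2
      rw [hlam, h.1, div_le_iff₀ (by positivity)]
      linarith
    · rw [h.1] at hlam
      rcases good_le_X hn0 hG with h1 | h1
      · refine le_trans ?_ (hg.trans h1)
        refine le_of_sq_le_sq ?_ g0nn
        rw [g0sq, hlam, ← hz]
        have : z * L / (z ^ 3 * L) = 1 / z ^ 2 := by field_simp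
        rw [this, div_pow]
        have : 0 < 1 / z ^ 2 := by positivity
        rw [div_eq_mul_one_div]
        nlinarith
      · rw [h1, div_le_one (by positivity)]; exact hl2
  have hstep : ∀ a : Fin n → Fin k, ∀ g, g0 ≤ g → g ≤ 1 / 2 → Good m g a →
      Ex (fun S : Sample n => ind (¬ Good m (g * (1 + 1 / (2 * lam))) (stepA a S))) ≤
        1 / (n : ℝ) ^ 2 := by
    intro a g h1 h2 h3
    have hx := hXm a g h1 h3
    have hgn : 0 ≤ g := g0nn.trans h1
    refine (tail_all hn0 a m g hgn h2 h3 _ ?_).trans ?_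
    · apply mul_le_mul_of_nonneg_left _ hgn
      have : 1 / (2 * lam) = (2 / lam) / 4 := by field_simp; norm_num
      rw [this]; linarith
    · have h4 : 6 * L ≤ n * g ^ 2 * X a m / 160 := by
        have : (484 * lam * L) * (2 / lam) ≤ n * g ^ 2 * X a m := by
          have := hng g h1
          gcongr
        have e : (484 * lam * L) * (2 / lam) = 968 * L := by field_simp; norm_num
        linarith
      have h5 : Real.exp (-(n * g ^ 2 * X a m / 160)) ≤ 1 / (n : ℝ) ^ 6 := by
        calc _ ≤ Real.exp (-((6 : ℕ) * L)) := Real.exp_le_exp.2 (by push_cast; linarith)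
          _ = _ := by
            rw [Real.exp_neg, Real.exp_nat_mul, hL, Real.exp_log (by positivity), one_div]
      calc _ ≤ ((n : ℝ) + 1) * (1 / (n : ℝ) ^ 6) := by gcongr
        _ ≤ (n : ℝ) ^ 4 * (1 / (n : ℝ) ^ 6) := by
          gcongr
          have : (n : ℝ) ^ 2 ≤ (n : ℝ) ^ 4 := pow_le_pow_right₀ (by linarith) (by norm_num)
          nlinarith
        _ = _ := by field_simp
  set N := ⌊100 * lam * L⌋₊ with hN
  set t := ⌈3 * lam * L⌉₊ with ht
  have hlL : 2 ≤ lam * L := by nlinarith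
  have hN1 : (N : ℝ) ≤ 100 * lam * L := Nat.floor_le (by positivity)
  have hN2 : 100 * lam * L < N + 1 := Nat.lt_floor_add_one _
  have ht1 : 3 * lam * L ≤ t := Nat.le_ceil _
  have ht2 : (t : ℝ) < 3 * lam * L + 1 := Nat.ceil_lt_add_one (by positivity)
  have htN : t ≤ N := by
    have : (t : ℝ) ≤ N := by nlinarith
    exact_mod_cast this
  obtain ⟨T, hT⟩ := Nat.exists_eq_add_of_le htN
  have hTR : (N : ℝ) = t + T := by rw [hT]; push_cast; ring
  have hT12 : 12 * L ≤ T := by nlinarith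
  have hgrow : 1 / 2 ≤ g0 * (1 + 1 / (2 * lam)) ^ t := by
    have h1 : (n : ℝ) ≤ (1 + 1 / (2 * lam)) ^ t := by
      have hp : 0 < 1 + 1 / (2 * lam) := by positivity
      rw [← Real.log_le_log_iff (by positivity) (by positivity), Real.log_pow, ← hL]
      have h2 := Real.one_sub_inv_le_log_of_pos hp
      have h3 : 1 / (3 * lam) ≤ Real.log (1 + 1 / (2 * lam)) := by
        refine le_trans ?_ h2
        have : 1 - (1 + 1 / (2 * lam))⁻¹ = 1 / (2 * lam + 1) := by field_simp; ring
        rw [this]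
        apply one_div_le_one_div_of_le (by positivity); linarith
      calc L = 3 * lam * L * (1 / (3 * lam)) := by field_simp
        _ ≤ _ := by gcongr
    have h2 : g0 * n ≤ g0 * (1 + 1 / (2 * lam)) ^ t := by gcongr
    have h3 : 1 ≤ Real.sqrt (lam * n * L) := by
      rw [Real.one_le_sqrt]; nlinarith
    linarith
  have hmain := phase1 hn0 m (1 / (n : ℝ) ^ 2) (1 / (2 * lam)) g0 (by positivity) (by positivity)
    g0nn g0half hstep T t a g0 le_rfl g0half hgrow hG0
  rw [← hT, ← hTR] at hmain
  have h34 : (3 / 4 : ℝ) ^ T ≤ 1 / (n : ℝ) ^ 3 := by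
    rw [← Real.log_le_log_iff (by positivity) (by positivity), Real.log_pow, one_div, Real.log_inv,
      Real.log_pow, ← hL]
    have := Real.log_le_sub_one_of_pos (show (0 : ℝ) < 3 / 4 by norm_num)
    push_cast
    nlinarith
  refine hmain.trans ?_
  calc _ ≤ n * (1 / (n : ℝ) ^ 3) + (100 * lam * L) * (1 / (n : ℝ) ^ 2) := by gcongr
    _ = (1 + 100 * lam * L) / (n : ℝ) ^ 2 := by field_simp
    _ ≤ _ := by
      gcongr
      nlinarith

end Aux

/-- Corollary: with `λ = min{2k, (n/log n)^{1/3}}`, for all sufficiently large `n`, if the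
initial `k`-cd `c̄` satisfies `M(c̄) = {m}` and `s(c̄) ≥ 22·√(λ·n·log n)`, then with
probability at least `1 − 110·λ·log n/n²` there is a round `t ≤ 100·λ·log n` at which all
`n` nodes have color `m`. -/
theorem upper_bound_min_k : ∃ n₀ : ℕ, ∀ n : ℕ, n₀ ≤ n → ∀ k : ℕ, ∀ lam : ℝ,
    lam = min (2 * (k : ℝ)) (((n : ℝ) / Real.log n) ^ ((1 : ℝ) / 3)) → ∀ c : Fin k → ℕ,
    (∑ h, c h = n) → ∀ a : Fin n → Fin k, (∀ h, cnt a h = c h) →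
    ∀ m : Fin k, Mset c = {m} →
    22 * Real.sqrt (lam * (n : ℝ) * Real.log n) ≤ (sval c : ℝ) →
    runPr (⌊100 * lam * Real.log n⌋₊) a
        (fun S => ∃ t : ℕ, (t : ℝ) ≤ 100 * lam * Real.log n ∧ cnt (trajA a S t) m = n) ≥
      1 - 110 * lam * Real.log n / (n : ℝ) ^ 2 := by
  have hev : ∀ᶠ n : ℕ in Filter.atTop, Real.log (n : ℝ) ≤ (1 / 85184) * (n : ℝ) := by
    have h := (Real.isLittleO_log_id_atTop.bound (show (0 : ℝ) < 1 / 85184 by norm_num))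
    have h2 := tendsto_natCast_atTop_atTop (R := ℝ) |>.eventually h
    filter_upwards [h2] with n hn
    have h3 := (le_abs_self _).trans hn
    simpa using h3
  obtain ⟨n1, hn1⟩ := Filter.eventually_atTop.1 hev
  refine ⟨max n1 3, ?_⟩
  intro n hn k lam hlam c _ a hac m hM hs
  have hn3 : 3 ≤ n := (le_max_right _ _).trans hn
  have hn3R : (3 : ℝ) ≤ n := by exact_mod_cast hn3
  have hlog := hn1 n ((le_max_left _ _).trans hn)
  have hL1 : 1 ≤ Real.log n := by
    rw [Real.le_log_iff_exp_le (by positivity)]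
    linarith [Real.exp_one_lt_d9]
  have hnL : 85184 ≤ (n : ℝ) / Real.log n := by
    rw [le_div_iff₀ (by positivity)]; linarith
  have hz3 : (((n : ℝ) / Real.log n) ^ ((1 : ℝ) / 3)) ^ 3 = (n : ℝ) / Real.log n := by
    rw [← Real.rpow_natCast, ← Real.rpow_mul (by positivity)]; norm_num
  have hz0 : 0 ≤ ((n : ℝ) / Real.log n) ^ ((1 : ℝ) / 3) := by positivity
  have hF := core n k (Real.log n) (((n : ℝ) / Real.log n) ^ ((1 : ℝ) / 3)) lam (by omega) rfl hL1
    (by rw [hz3]; field_simp)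
    (by
      by_contra hlt
      push Not at hlt
      have : (((n : ℝ) / Real.log n) ^ ((1 : ℝ) / 3)) ^ 3 < 44 ^ 3 := by gcongr
      rw [hz3] at this
      norm_num at this
      linarith) hlam a m
    (by
      intro j hj
      have h := gap_init c m hM j hj
      rw [hac, hac]
      have h' : (c j : ℝ) + sval c ≤ c m := by exact_mod_cast h
      linarith)
  have hlam0 : 0 ≤ lam := by rw [hlam]; positivity
  have hR := run_ge (N := ⌊100 * lam * Real.log n⌋₊) (by omega : 0 < n) a m
    (100 * lam * Real.log n) (Nat.floor_le (by positivity))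
  linarith
end
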